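/- arXiv:0910.2055 — 4 statements merged into one kernel-verified Lean document; each statement's English description precedes it below -/
import Mathlib

section
/- Let V be a finite-dimensional real inner product space, Υ a lattice in V such that √2·Υ is even and unimodular, M, N a polarization of Υ, and k ≥ 1 an integer. Then the lattice L(M,N,k) ⊆ V^k is integral for the product inner product, and its sublattice L_M is an even lattice. -/
noncomputable section

open scoped RealInnerProductSpace Pointwise
open Module

variable {V : Type*} [NormedAddCommGroup V] [InnerProductSpace ℝ V]

/-- `L` is a (full) lattice in `V`: a finitely generated `ℤ`-submodule spanning `V` over `ℝ`. -/
def IsLat (L : Submodule ℤ V) : Prop :=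
  L.FG ∧ Submodule.span ℝ (L : Set V) = ⊤

/-- The lattice `L` is integral: all inner products of lattice vectors are integers. -/
def IsIntegralLat (L : Submodule ℤ V) : Prop :=
  ∀ x ∈ L, ∀ y ∈ L, ∃ n : ℤ, ⟪x, y⟫ = (n : ℝ)

/-- The lattice `L` is even: it is integral and all norms are even integers. -/
def IsEvenLat (L : Submodule ℤ V) : Prop :=
  IsIntegralLat L ∧ ∀ x ∈ L, ∃ n : ℤ, ⟪x, x⟫ = 2 * (n : ℝ)

/-- The lattice `L` is unimodular: the Gram matrix of some `ℤ`-basis has determinant 1. -/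
def IsUnimodularLat (L : Submodule ℤ V) : Prop :=
  ∃ (n : ℕ) (b : Basis (Fin n) ℤ L),
    (Matrix.of fun i j : Fin n => ⟪(b i : V), (b j : V)⟫).det = 1

/-- The minimum norm `μ(L)` of a lattice. -/
def minNorm (L : Submodule ℤ V) : ℝ :=
  sInf {r : ℝ | ∃ x ∈ L, x ≠ 0 ∧ ⟪x, x⟫ = r}

/-- `√2·Υ` is an even unimodular lattice: all norms of `Υ` are integers, all doubled inner
products are integers, and the Gram matrix of the form `2⟪·,·⟫` on a `ℤ`-basis of `Υ` has
determinant 1. -/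
def SqrtTwoEvenUnimod (Υ : Submodule ℤ V) : Prop :=
  (∀ x ∈ Υ, ∃ n : ℤ, ⟪x, x⟫ = (n : ℝ)) ∧
  (∀ x ∈ Υ, ∀ y ∈ Υ, ∃ n : ℤ, 2 * ⟪x, y⟫ = (n : ℝ)) ∧
  ∃ (n : ℕ) (b : Basis (Fin n) ℤ Υ),
    (Matrix.of fun i j : Fin n => 2 * ⟪(b i : V), (b j : V)⟫).det = 1

/-- `M, N` is a polarization of `Υ`: a pair of integral sublattices with
`M + N = Υ` and `M ∩ N = 2Υ`. -/
def IsPolarization (Υ M N : Submodule ℤ V) : Prop :=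
  M ≤ Υ ∧ N ≤ Υ ∧ IsIntegralLat M ∧ IsIntegralLat N ∧ M ⊔ N = Υ ∧ M ⊓ N = (2 : ℤ) • Υ

/-- The sublattice `L_M = {(x_1,…,x_k) ∈ M^k : x_1+⋯+x_k ∈ M ∩ N}` of `V^k`. -/
def LsubM (M N : Submodule ℤ V) (k : ℕ) : Submodule ℤ (PiLp 2 fun _ : Fin k => V) where
  carrier := {v | (∀ i, v i ∈ M) ∧ (∑ i, v i) ∈ M ⊓ N}
  add_mem' := fun {a b} ha hb =>
    ⟨fun i => M.add_mem (ha.1 i) (hb.1 i), by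
      have h : (∑ i, (a + b) i) = (∑ i, a i) + ∑ i, b i :=
        (Finset.sum_congr rfl fun i _ => rfl).trans Finset.sum_add_distrib
      rw [h]; exact (M ⊓ N).add_mem ha.2 hb.2⟩
  zero_mem' := ⟨fun _ => M.zero_mem, by
      have h : (∑ i : Fin k, (0 : PiLp 2 fun _ : Fin k => V) i) = 0 :=
        Finset.sum_eq_zero fun _ _ => rfl
      rw [h]; exact (M ⊓ N).zero_mem⟩
  smul_mem' := fun c a ha =>
    ⟨fun i => M.smul_mem c (ha.1 i), by
      have h : (∑ i, (c • a) i) = c • ∑ i, a i := by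
        show (∑ i, c • a i) = c • ∑ i, a i
        exact Finset.smul_sum.symm
      rw [h]; exact (M ⊓ N).smul_mem c ha.2⟩

/-- The diagonal sublattice `L^N = {(y,…,y) : y ∈ N}` of `V^k`. -/
def LsupN (N : Submodule ℤ V) (k : ℕ) : Submodule ℤ (PiLp 2 fun _ : Fin k => V) where
  carrier := {v | ∃ y ∈ N, ∀ i, v i = y}
  add_mem' := fun {a b} ha hb => by
    obtain ⟨ya, hya, ha⟩ := ha
    obtain ⟨yb, hyb, hb⟩ := hb
    exact ⟨ya + yb, N.add_mem hya hyb, fun i => by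
      show a i + b i = ya + yb
      rw [ha i, hb i]⟩
  zero_mem' := ⟨0, N.zero_mem, fun _ => rfl⟩
  smul_mem' := fun c a ha => by
    obtain ⟨y, hy, h⟩ := ha
    exact ⟨c • y, N.smul_mem c hy, fun i => by
      show c • a i = c • y
      rw [h i]⟩

/-- The lattice `L(M,N,k) = L_M + L^N ⊆ V^k`. -/
def LMN (M N : Submodule ℤ V) (k : ℕ) : Submodule ℤ (PiLp 2 fun _ : Fin k => V) :=
  LsubM M N k ⊔ LsupN N k

/-- The Leech polarization setup: `V` is 24-dimensional, `√2·Υ` is even unimodular with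
minimum norm 4, and `M, N` is a polarization of `Υ` by two copies of the Leech lattice. -/
def LeechSetup (Υ M N : Submodule ℤ V) : Prop :=
  Module.finrank ℝ V = 24 ∧ IsLat Υ ∧ SqrtTwoEvenUnimod Υ ∧
  (∀ v ∈ Υ, v ≠ 0 → 4 ≤ 2 * ⟪v, v⟫) ∧
  IsPolarization Υ M N ∧
  IsLat M ∧ IsEvenLat M ∧ IsUnimodularLat M ∧ minNorm M = 4 ∧
  IsLat N ∧ IsEvenLat N ∧ IsUnimodularLat N ∧ minNorm N = 4

/-- `(w,x,y,z) ∈ N × M × M × M` is admissible if `x + y + z ∈ M ∩ N`. -/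
def Admissible (M N : Submodule ℤ V) (w x y z : V) : Prop :=
  w ∈ N ∧ x ∈ M ∧ y ∈ M ∧ z ∈ M ∧ x + y + z ∈ M ⊓ N

/-- An offender is an admissible quadruple all three of whose associated vectors
`w+x, w+y, w+z` have norm 2. -/
def Offender (M N : Submodule ℤ V) (w x y z : V) : Prop :=
  Admissible M N w x y z ∧
  ⟪w + x, w + x⟫ = 2 ∧ ⟪w + y, w + y⟫ = 2 ∧ ⟪w + z, w + z⟫ = 2

/-- A super offender is an offender with `⟪w,w⟫ = 4` whose multiset of norms
`{⟪x,x⟫, ⟪y,y⟫, ⟪z,z⟫}` equals `{6,6,4}`. -/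
def SuperOffender (M N : Submodule ℤ V) (w x y z : V) : Prop :=
  Offender M N w x y z ∧ ⟪w, w⟫ = 4 ∧
  ({⟪x, x⟫, ⟪y, y⟫, ⟪z, z⟫} : Multiset ℝ) = ({6, 6, 4} : Multiset ℝ)

/-!
Expanding `⟪∑ xᵢ, ∑ xᵢ⟫`, the cross terms come in equal pairs, so for `xᵢ` in an integral lattice
the norm of `∑ xᵢ` is congruent modulo 2 to `∑ ⟪xᵢ, xᵢ⟫`, the norm of the tuple `(xᵢ)`. For a tuple
in `L_M` the sum lies in `M ∩ N`, so `L_M` is even as soon as `M ∩ N` is; and `M ∩ N = 2Υ` is even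
because `⟪2u, 2u⟫ = 2 (2⟪u, u⟫)`. The inner product of a tuple in `L_M` with `(y, …, y) ∈ L^N` is
`⟪∑ xᵢ, y⟫`, an inner product of two vectors of the integral lattice `N`.
-/

lemma exists_intCast_eq_sum {ι : Type*} {s : Finset ι} {f : ι → ℝ}
    (hf : ∀ i ∈ s, ∃ n : ℤ, f i = n) : ∃ n : ℤ, ∑ i ∈ s, f i = n := by
  choose! g hg using hf
  exact ⟨∑ i ∈ s, g i, by push_cast; exact Finset.sum_congr rfl hg⟩

lemma inner_eq_inner_sum_of_forall_apply_eq {ι : Type*} [Fintype ι]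
    {v w : PiLp 2 fun _ : ι => V} {y : V} (hw : ∀ i, w i = y) :
    ⟪v, w⟫ = ⟪∑ i, v i, y⟫ := by
  simp only [PiLp.inner_apply, hw, sum_inner]

lemma IsIntegralLat.sup {L L' : Submodule ℤ V} (hL : IsIntegralLat L) (hL' : IsIntegralLat L')
    (hLL' : ∀ x ∈ L, ∀ y ∈ L', ∃ n : ℤ, ⟪x, y⟫ = n) : IsIntegralLat (L ⊔ L') := by
  intro v hv w hw
  obtain ⟨a, ha, b, hb, rfl⟩ := Submodule.mem_sup.1 hv
  obtain ⟨c, hc, d, hd, rfl⟩ := Submodule.mem_sup.1 hw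
  obtain ⟨n_ac, hac⟩ := hL a ha c hc
  obtain ⟨n_ad, had⟩ := hLL' a ha d hd
  obtain ⟨n_cb, hcb⟩ := hLL' c hc b hb
  obtain ⟨n_bd, hbd⟩ := hL' b hb d hd
  refine ⟨n_ac + n_ad + (n_cb + n_bd), ?_⟩
  rw [inner_add_left, inner_add_right, inner_add_right, hac, had, real_inner_comm c b, hcb, hbd]
  push_cast
  rfl

lemma IsIntegralLat.of_forall_apply_mem {ι : Type*} [Fintype ι] {E : ι → Type*}
    [∀ i, NormedAddCommGroup (E i)] [∀ i, InnerProductSpace ℝ (E i)]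
    {M : ∀ i, Submodule ℤ (E i)} {L : Submodule ℤ (PiLp 2 E)}
    (hM : ∀ i, IsIntegralLat (M i)) (hL : ∀ v ∈ L, ∀ i, v i ∈ M i) : IsIntegralLat L := by
  intro v hv w hw
  rw [PiLp.inner_apply]
  exact exists_intCast_eq_sum fun i _ => hM i _ (hL v hv i) _ (hL w hw i)

lemma IsIntegralLat.exists_sum_inner_self_eq {M : Submodule ℤ V} (hM : IsIntegralLat M)
    {ι : Type*} (s : Finset ι) {x : ι → V} (hx : ∀ i ∈ s, x i ∈ M) :
    ∃ n : ℤ, ∑ i ∈ s, ⟪x i, x i⟫ = ⟪∑ i ∈ s, x i, ∑ i ∈ s, x i⟫ + 2 * n := by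
  classical
  induction s using Finset.induction_on with
  | empty => exact ⟨0, by simp⟩
  | insert a s ha ih =>
    rw [Finset.forall_mem_insert] at hx
    obtain ⟨n, hn⟩ := ih hx.2
    obtain ⟨m, hm⟩ := hM (x a) hx.1 (∑ i ∈ s, x i) (M.sum_mem hx.2)
    refine ⟨n - m, ?_⟩
    rw [Finset.sum_insert ha, Finset.sum_insert ha, real_inner_add_add_self, hn, hm]
    push_cast
    ring

lemma isEvenLat_two_smul {Υ : Submodule ℤ V}
    (hΥ : ∀ x ∈ Υ, ∀ y ∈ Υ, ∃ n : ℤ, 2 * ⟪x, y⟫ = n) : IsEvenLat ((2 : ℤ) • Υ) := by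
  have inner_even : ∀ x ∈ (2 : ℤ) • Υ, ∀ y ∈ (2 : ℤ) • Υ, ∃ n : ℤ, ⟪x, y⟫ = 2 * n := by
    intro x hx y hy
    obtain ⟨u, hu, rfl⟩ := (Submodule.mem_smul_pointwise_iff_exists _ _ _).1 hx
    obtain ⟨v, hv, rfl⟩ := (Submodule.mem_smul_pointwise_iff_exists _ _ _).1 hy
    obtain ⟨n, hn⟩ := hΥ u hu v hv
    refine ⟨n, ?_⟩
    rw [two_smul, two_smul, inner_add_left, inner_add_right, ← hn]
    ring
  refine ⟨fun x hx y hy => ?_, fun x hx => inner_even x hx x hx⟩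
  obtain ⟨n, hn⟩ := inner_even x hx y hy
  exact ⟨2 * n, by rw [hn]; push_cast; rfl⟩

section Polarization

variable {M N : Submodule ℤ V}

lemma isIntegralLat_LsubM (hM : IsIntegralLat M) (k : ℕ) : IsIntegralLat (LsubM M N k) :=
  .of_forall_apply_mem (fun _ => hM) fun _ hv => hv.1

lemma isIntegralLat_LsupN (hN : IsIntegralLat N) (k : ℕ) : IsIntegralLat (LsupN N k) :=
  .of_forall_apply_mem (fun _ => hN) fun _ ⟨_, hy, hv⟩ i => hv i ▸ hy

lemma isIntegralLat_LMN (hM : IsIntegralLat M) (hN : IsIntegralLat N) (k : ℕ) :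
    IsIntegralLat (LMN M N k) := by
  refine (isIntegralLat_LsubM hM k).sup (isIntegralLat_LsupN hN k) fun v hv w ⟨y, hy, hw⟩ => ?_
  rw [inner_eq_inner_sum_of_forall_apply_eq hw]
  exact hN _ hv.2.2 y hy

lemma isEvenLat_LsubM (hM : IsIntegralLat M) (hMN : IsEvenLat (M ⊓ N)) (k : ℕ) :
    IsEvenLat (LsubM M N k) := by
  refine ⟨isIntegralLat_LsubM hM k, fun v hv => ?_⟩
  obtain ⟨n, hn⟩ := hM.exists_sum_inner_self_eq Finset.univ fun i _ => hv.1 i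
  obtain ⟨m, hm⟩ := hMN.2 _ hv.2
  refine ⟨m + n, ?_⟩
  rw [PiLp.inner_apply, hn, hm]
  push_cast
  ring

theorem statement0_general (hM : IsIntegralLat M) (hN : IsIntegralLat N)
    (hMN : IsEvenLat (M ⊓ N)) (k : ℕ) :
    IsIntegralLat (LMN M N k) ∧ IsEvenLat (LsubM M N k) :=
  ⟨isIntegralLat_LMN hM hN k, isEvenLat_LsubM hM hMN k⟩

end Polarization

/-- `L(M,N,k)` is integral for the product inner product of `V^k`,
and its sublattice `L_M` is even. -/
theorem statement0 (Υ M N : Submodule ℤ V) (hΥlat : IsLat Υ)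
    (hΥ : SqrtTwoEvenUnimod Υ) (hpol : IsPolarization Υ M N) (k : ℕ) (hk : 1 ≤ k) :
    IsIntegralLat (LMN M N k) ∧ IsEvenLat (LsubM M N k) := by
  obtain ⟨-, -, hM, hN, -, hMN⟩ := hpol
  exact statement0_general hM hN (hMN ▸ isEvenLat_two_smul hΥ.2.1) k
end
end

section
/- Let V be a finite-dimensional real inner product space, Υ a lattice in V such that √2·Υ is even and unimodular, M, N a polarization of Υ, and k ≥ 1 an integer. Then L(M,N,k) is a unimodular lattice in V^k: it has full rank k·dim V and the Gram matrix of any ℤ-basis of L(M,N,k) has determinant 1. -/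
noncomputable section

open scoped RealInnerProductSpace Pointwise
open Module

variable {V : Type*} [NormedAddCommGroup V] [InnerProductSpace ℝ V]

/-! A lattice is unimodular exactly when it equals its dual `L* = {x | ⟪x, y⟫ ∈ ℤ for all y ∈ L}`,
so the claim is that `L(M,N,k)* = L(M,N,k)`. The hypothesis on `Υ` says `(2Υ)* = Υ`, that is
`(M ∩ N)* = M + N` and `(M + N)* = M ∩ N`. Since `M ⊆ M* ⊆ M + N`, the modular law gives
`M* = M + N ∩ M*`, and `N ∩ M* ⊆ N* ∩ M* = (M + N)* = M ∩ N`; hence `M* = M`, and likewise `N* = N`.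

Now let `v ∈ L(M,N,k)*`. Testing against vectors of `L_M` with one nonzero coordinate `u ∈ M ∩ N`,
or two nonzero coordinates `m, -m` with `m ∈ M`, gives `v i ∈ (M ∩ N)* = M + N` and
`v i - v j ∈ M* = M`; testing against the diagonal gives `∑ i, v i ∈ N* = N`. So all coordinates of
`v` are congruent modulo `M` to a common `y ∈ N`, and `v - (y, …, y) ∈ L_M`. -/

section DualSubmodule

variable {ι κ R S E : Type*} [CommRing R] [Field S] [AddCommGroup E] [Algebra R S]
  [Module R E] [Module S E] [IsScalarTower R S E]

theorem dualSubmodule_intCast_smul (B : LinearMap.BilinForm S E) (c : ℤ) (L : Submodule ℤ E) :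
    ((c : S) • B).dualSubmodule L = B.dualSubmodule (c • L) := by
  ext x
  simp only [LinearMap.BilinForm.mem_dualSubmodule, Submodule.mem_smul_pointwise_iff_exists,
    forall_exists_index, and_imp, forall_apply_eq_imp_iff₂, map_zsmul, LinearMap.smul_apply,
    smul_eq_mul, zsmul_eq_mul]

variable [IsDomain R] [Module.IsTorsionFree R S]

theorem span_range_le_span_range_basis_iff (v : κ → E) (d : Basis ι S E) :
    Submodule.span R (Set.range v) ≤ Submodule.span R (Set.range d) ↔
      ∃ P : Matrix ι κ R, P.map (algebraMap R S) = d.toMatrix v := by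
  rw [Submodule.span_le, Set.range_subset_iff]
  simp only [SetLike.mem_coe, d.mem_span_iff_repr_mem R]
  refine ⟨fun h ↦ ?_, fun ⟨P, hP⟩ j i ↦ ⟨P i j, congr_fun₂ hP i j⟩⟩
  choose P hP using h
  exact ⟨.of fun i j ↦ P j i, Matrix.ext fun i j ↦ hP j i⟩

variable [Fintype ι] [DecidableEq ι]

theorem span_range_basis_eq_iff (e d : Basis ι S E) :
    Submodule.span R (Set.range e) = Submodule.span R (Set.range d) ↔
      ∃ P : Matrix ι ι R, IsUnit P.det ∧ P.map (algebraMap R S) = d.toMatrix e := by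
  have map_inj := Matrix.map_injective (m := ι) (n := ι) (FaithfulSMul.algebraMap_injective R S)
  constructor
  · intro h
    obtain ⟨P, hP⟩ := (span_range_le_span_range_basis_iff e d).mp h.le
    obtain ⟨Q, hQ⟩ := (span_range_le_span_range_basis_iff d e).mp h.ge
    have hPQ : P * Q = 1 := map_inj <| by
      simp [Matrix.map_mul, hP, hQ]
    exact ⟨P, Matrix.isUnit_det_of_right_inverse hPQ, hP⟩
  · rintro ⟨P, hdet, hP⟩
    refine le_antisymm ((span_range_le_span_range_basis_iff e d).mpr ⟨P, hP⟩)
      ((span_range_le_span_range_basis_iff d e).mpr ⟨P⁻¹, ?_⟩)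
    calc P⁻¹.map (algebraMap R S)
      _ = (P⁻¹.map (algebraMap R S) * d.toMatrix e) * e.toMatrix d := by
        simp [mul_assoc]
      _ = e.toMatrix d := by
        simp [← hP, ← Matrix.map_mul, Matrix.nonsing_inv_mul P hdet]

theorem toMatrix_dualBasis (B : LinearMap.BilinForm S E) (hB : B.Nondegenerate) (e : Basis ι S E) :
    (B.dualBasis hB e).toMatrix e = (LinearMap.BilinForm.toMatrix e B).transpose := by
  ext i j
  simp [Basis.toMatrix_apply, LinearMap.BilinForm.toMatrix_apply]

theorem dualSubmodule_span_range_basis_eq_self_iff (B : LinearMap.BilinForm S E)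
    (hB : B.Nondegenerate) (e : Basis ι S E) :
    B.dualSubmodule (Submodule.span R (Set.range e)) = Submodule.span R (Set.range e) ↔
      ∃ G : Matrix ι ι R, IsUnit G.det ∧
        G.map (algebraMap R S) = LinearMap.BilinForm.toMatrix e B := by
  rw [LinearMap.BilinForm.dualSubmodule_span_of_basis B hB, eq_comm, span_range_basis_eq_iff,
    toMatrix_dualBasis, (Function.Involutive.surjective Matrix.transpose_transpose).exists]
  simp only [Matrix.det_transpose, Matrix.transpose_map, Matrix.transpose_inj]

theorem dualSubmodule_eq_self_iff_exists_isUnit_det {V : Type*} [NormedAddCommGroup V]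
    [NormedSpace ℝ V] [FiniteDimensional ℝ V] {L : Submodule ℤ V} [DiscreteTopology L]
    [IsZLattice ℝ L] (B : LinearMap.BilinForm ℝ V) (hB : B.Nondegenerate) (b : Basis ι ℤ L) :
    B.dualSubmodule L = L ↔
      ∃ G : Matrix ι ι ℤ, IsUnit G.det ∧ G.map (↑) = .of fun i j ↦ B (b i) (b j) := by
  have hgram : .of (fun i j ↦ B (b i) (b j)) =
      LinearMap.BilinForm.toMatrix (b.ofZLatticeBasis ℝ L) B := by
    ext i j
    simp [LinearMap.BilinForm.toMatrix_apply]
  have hself := dualSubmodule_span_range_basis_eq_self_iff (R := ℤ) B hB (b.ofZLatticeBasis ℝ L)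
  rw [b.ofZLatticeBasis_span ℝ L] at hself
  rw [hgram]
  exact hself

end DualSubmodule

section DualLat

/-- The dual lattice `L* = {x | ⟪x, y⟫ ∈ ℤ for all y ∈ L}`, as an instance of Mathlib's
`dualSubmodule`; there `ℤ ⊆ ℝ` is written `(1 : Submodule ℤ ℝ)`. -/
def dualLat (L : Submodule ℤ V) : Submodule ℤ V :=
  LinearMap.BilinForm.dualSubmodule (innerₗ V) L

variable {L L' M N Υ : Submodule ℤ V} {x : V}

theorem mem_dualLat : x ∈ dualLat L ↔ ∀ y ∈ L, ⟪x, y⟫ ∈ (1 : Submodule ℤ ℝ) :=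
  Iff.rfl

theorem isIntegralLat_iff_le_dualLat : IsIntegralLat L ↔ L ≤ dualLat L := by
  simp only [IsIntegralLat, SetLike.le_def, mem_dualLat, Submodule.mem_one, eq_comm,
    algebraMap_int_eq, eq_intCast]

theorem le_dualLat_comm : L ≤ dualLat L' ↔ L' ≤ dualLat L := by
  conv_lhs => rw [dualLat, ← flip_innerₗ]
  exact LinearMap.BilinForm.le_flip_dualSubmodule (innerₗ V)

theorem dualLat_anti (h : L ≤ L') : dualLat L' ≤ dualLat L :=
  fun _ hx y hy ↦ hx y (h hy)

theorem dualLat_sup : dualLat (L ⊔ L') = dualLat L ⊓ dualLat L' :=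
  eq_of_forall_le_iff fun K ↦ by
    rw [le_dualLat_comm, sup_le_iff, le_inf_iff, le_dualLat_comm, le_dualLat_comm (L := L')]

theorem dualLat_eq_zsmul_dualLat_zsmul {c : ℤ} (hc : c ≠ 0) :
    dualLat L = c • dualLat (c • L) := by
  have inner_zsmul (u y : V) : ⟪c • u, y⟫ = ⟪u, c • y⟫ := by
    simp only [← Int.cast_smul_eq_zsmul ℝ, real_inner_smul_left, real_inner_smul_right]
  ext x
  simp only [Submodule.mem_smul_pointwise_iff_exists, mem_dualLat, forall_exists_index, and_imp,
    forall_apply_eq_imp_iff₂]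
  constructor
  · intro hx
    have hxc : c • ((c : ℝ)⁻¹ • x) = x := by
      rw [← Int.cast_smul_eq_zsmul ℝ, smul_inv_smul₀ (Int.cast_ne_zero.mpr hc)]
    exact ⟨(c : ℝ)⁻¹ • x, fun y hy ↦ by rw [← inner_zsmul, hxc]; exact hx y hy, hxc⟩
  · rintro ⟨u, hu, rfl⟩ y hy
    rw [inner_zsmul]
    exact hu y hy

theorem dualLat_eq_self_of_inf_sup (hM : M ≤ dualLat M) (hN : N ≤ dualLat N)
    (hinf : dualLat (M ⊓ N) ≤ M ⊔ N) (hsup : dualLat (M ⊔ N) ≤ M ⊓ N) : dualLat M = M := by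
  refine le_antisymm ?_ hM
  calc dualLat M
    _ = (M ⊔ N) ⊓ dualLat M := (inf_eq_right.mpr <| (dualLat_anti inf_le_left).trans hinf).symm
    _ = M ⊔ N ⊓ dualLat M := sup_inf_assoc_of_le N hM
    _ ≤ M ⊔ dualLat N ⊓ dualLat M := by gcongr
    _ = M ⊔ dualLat (M ⊔ N) := by rw [dualLat_sup, inf_comm]
    _ = M := sup_eq_left.mpr (hsup.trans inf_le_left)

theorem span_real_eq_top_of_dualLat_le [FiniteDimensional ℝ V] (h : dualLat L ≤ L) :
    Submodule.span ℝ (L : Set V) = ⊤ := by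
  rw [← Submodule.orthogonal_eq_bot_iff, Submodule.eq_bot_iff]
  intro v hv
  rw [Submodule.mem_orthogonal'] at hv
  have hvL : v ∈ L := h fun x hx ↦ by
    rw [innerₗ_apply_apply, hv x (Submodule.subset_span hx)]
    exact zero_mem _
  exact inner_self_eq_zero.mp (hv v (Submodule.subset_span hvL))

theorem discreteTopology_of_inner_self_int (h : ∀ x ∈ L, ∃ n : ℤ, ⟪x, x⟫ = n) :
    DiscreteTopology L := by
  rw [discreteTopology_iff_isOpen_singleton_zero, Metric.isOpen_singleton_iff]
  refine ⟨1, one_pos, fun y hy ↦ ?_⟩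
  obtain ⟨n, hn⟩ := h y y.2
  rw [dist_zero_right, Submodule.coe_norm] at hy
  have hn1 : n < 1 := by
    rw [← Int.cast_lt (R := ℝ), ← hn, real_inner_self_eq_norm_sq, Int.cast_one]
    exact pow_lt_one₀ (norm_nonneg _) hy two_ne_zero
  have hn0 : 0 ≤ n := by
    rw [← Int.cast_nonneg_iff (R := ℝ), ← hn]
    exact real_inner_self_nonneg
  rw [← Submodule.coe_eq_zero, ← inner_self_eq_zero (𝕜 := ℝ), hn, Int.cast_eq_zero]
  lia

theorem nondegenerate_smul_innerₗ {c : ℝ} (hc : c ≠ 0) : (c • innerₗ V).Nondegenerate := by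
  have inner_self (x : V) (hx : (c • innerₗ V) x x = 0) : x = 0 :=
    inner_self_eq_zero.mp <| (mul_eq_zero.mp hx).resolve_left hc
  exact ⟨fun x hx ↦ inner_self x (hx x), fun x hx ↦ inner_self x (hx x)⟩

theorem nondegenerate_innerₗ : (innerₗ V).Nondegenerate := by
  simpa only [one_smul] using nondegenerate_smul_innerₗ (V := V) one_ne_zero

section FiniteDimensional

variable [FiniteDimensional ℝ V]

theorem det_gram_eq_one_of_dualLat_eq [DiscreteTopology L] [IsZLattice ℝ L] (h : dualLat L = L)
    {ι : Type*} [Fintype ι] [DecidableEq ι] (b : Basis ι ℤ L) :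
    (Matrix.gram ℝ fun i ↦ (b i : V)).det = 1 := by
  obtain ⟨G, hG, hgram⟩ :=
    (dualSubmodule_eq_self_iff_exists_isUnit_det (innerₗ V) nondegenerate_innerₗ b).mp h
  have hdet : (Matrix.gram ℝ fun i ↦ (b i : V)).det = G.det := by
    rw [Int.cast_det, hgram]
    rfl
  have hnonneg : 0 ≤ G.det := by
    rw [← Int.cast_nonneg_iff (R := ℝ), ← hdet]
    exact (Matrix.posSemidef_gram ℝ _).det_nonneg
  have hone : G.det = 1 := (Int.isUnit_iff.mp hG).resolve_right (by lia)
  rw [hdet, hone, Int.cast_one]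

theorem SqrtTwoEvenUnimod.dualLat_two_smul (hΥ : SqrtTwoEvenUnimod Υ)
    (hspan : Submodule.span ℝ (Υ : Set V) = ⊤) :
    dualLat ((2 : ℤ) • Υ) = Υ := by
  obtain ⟨hself, hint, n, b, hdet⟩ := hΥ
  have := discreteTopology_of_inner_self_int hself
  have : IsZLattice ℝ Υ := ⟨hspan⟩
  choose G hG using fun i j ↦ hint (b i) (b i).2 (b j) (b j).2
  have hgram : (Matrix.of G).map ((↑) : ℤ → ℝ) = .of fun i j ↦ 2 * ⟪(b i : V), (b j : V)⟫ :=
    Matrix.ext fun i j ↦ (hG i j).symm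
  have hGdet : (Matrix.of G).det = 1 := by
    rw [← Int.cast_inj (α := ℝ), Int.cast_det, Int.cast_one, hgram, hdet]
  rw [dualLat, ← dualSubmodule_intCast_smul, dualSubmodule_eq_self_iff_exists_isUnit_det _
    (nondegenerate_smul_innerₗ (by norm_num)) b]
  exact ⟨.of G, hGdet ▸ isUnit_one, hgram⟩

end FiniteDimensional

end DualLat

namespace IsPolarization

variable {Υ M N : Submodule ℤ V}

theorem symm (h : IsPolarization Υ M N) : IsPolarization Υ N M := by
  obtain ⟨hMΥ, hNΥ, hM, hN, hsup, hinf⟩ := h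
  exact ⟨hNΥ, hMΥ, hN, hM, sup_comm N M ▸ hsup, inf_comm N M ▸ hinf⟩

theorem dualLat_inf (h : IsPolarization Υ M N) (hΥ : dualLat ((2 : ℤ) • Υ) = Υ) :
    dualLat (M ⊓ N) = M ⊔ N := by
  obtain ⟨-, -, -, -, hsup, hinf⟩ := h
  rw [hinf, hΥ, hsup]

theorem dualLat_sup (h : IsPolarization Υ M N) (hΥ : dualLat ((2 : ℤ) • Υ) = Υ) :
    dualLat (M ⊔ N) = M ⊓ N := by
  obtain ⟨-, -, -, -, hsup, hinf⟩ := h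
  rw [hsup, hinf, dualLat_eq_zsmul_dualLat_zsmul two_ne_zero, hΥ]

theorem dualLat_left (h : IsPolarization Υ M N) (hΥ : dualLat ((2 : ℤ) • Υ) = Υ) :
    dualLat M = M := by
  obtain ⟨hM, hN, -⟩ := h.2.2
  exact dualLat_eq_self_of_inf_sup (isIntegralLat_iff_le_dualLat.mp hM)
    (isIntegralLat_iff_le_dualLat.mp hN) (h.dualLat_inf hΥ).le (h.dualLat_sup hΥ).le

end IsPolarization

section LMN

variable {M N : Submodule ℤ V} {k : ℕ} {v : PiLp 2 fun _ : Fin k ↦ V}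

theorem inner_piLp_single_right (v : PiLp 2 fun _ : Fin k ↦ V) (i : Fin k) (u : V) :
    ⟪v, PiLp.single 2 i u⟫ = ⟪v i, u⟫ := by
  rw [PiLp.inner_apply, Finset.sum_eq_single i]
  · simp
  · intro j _ hj
    simp [hj]
  · simp

theorem mem_LMN {W : Type*} [NormedAddCommGroup W] {M N : Submodule ℤ W}
    {v : PiLp 2 fun _ : Fin k ↦ W} :
    v ∈ LMN M N k ↔ (∃ y ∈ N, ∀ i, v i - y ∈ M) ∧ ∑ i, v i ∈ N := by
  rw [LMN, Submodule.mem_sup]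
  constructor
  · rintro ⟨x, ⟨hxM, hxsum⟩, d, ⟨y, hy, hd⟩, rfl⟩
    refine ⟨⟨y, hy, fun i ↦ by simpa [hd] using hxM i⟩, ?_⟩
    simpa [Finset.sum_add_distrib, hd] using add_mem hxsum.2 (nsmul_mem hy k)
  · rintro ⟨⟨y, hy, hv⟩, hsum⟩
    refine ⟨v - WithLp.toLp 2 fun _ ↦ y, ⟨hv, sum_mem fun i _ ↦ hv i, ?_⟩,
      WithLp.toLp 2 fun _ ↦ y, ⟨y, hy, fun _ ↦ rfl⟩, sub_add_cancel _ _⟩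
    simpa using sub_mem hsum (nsmul_mem hy k)

theorem mem_dualLat_LsupN : v ∈ dualLat (LsupN N k) ↔ ∑ i, v i ∈ dualLat N := by
  have inner_diagonal (y : V) : ⟪v, WithLp.toLp 2 fun _ ↦ y⟫ = ⟪∑ i, v i, y⟫ := by
    rw [PiLp.inner_apply, sum_inner]
  simp only [mem_dualLat, ← inner_diagonal]
  refine ⟨fun h y hy ↦ h _ ⟨y, hy, fun _ ↦ rfl⟩, fun h w ⟨y, hy, hw⟩ ↦ ?_⟩
  have hwy : w = WithLp.toLp 2 fun _ ↦ y := PiLp.ext hw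
  exact hwy ▸ h y hy

theorem apply_mem_dualLat_inf (hv : v ∈ dualLat (LsubM M N k)) (i : Fin k) :
    v i ∈ dualLat (M ⊓ N) := fun u hu ↦ by
  rw [innerₗ_apply_apply, ← inner_piLp_single_right]
  refine hv _ ⟨fun j ↦ ?_, by simpa using hu⟩
  obtain rfl | hj := eq_or_ne j i
  · simpa using hu.1
  · simp [hj]

theorem sub_mem_dualLat_left (hv : v ∈ dualLat (LsubM M N k)) (i j : Fin k) :
    v i - v j ∈ dualLat M := fun m hm ↦ by
  have single_mem (i l : Fin k) : (PiLp.single 2 i m : PiLp 2 fun _ : Fin k ↦ V) l ∈ M := by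
    obtain rfl | hl := eq_or_ne l i
    · simpa using hm
    · simp [hl]
  rw [innerₗ_apply_apply, inner_sub_left, ← inner_piLp_single_right, ← inner_piLp_single_right,
    ← inner_sub_right]
  refine hv _ ⟨fun l ↦ sub_mem (single_mem i l) (single_mem j l), ?_⟩
  simp

theorem LMN_le_dualLat (hM : M ≤ dualLat M) (hN : N ≤ dualLat N) :
    LMN M N k ≤ dualLat (LMN M N k) := by
  have LsubM_le : LsubM M N k ≤ dualLat (LsubM M N k) := fun x hx z hz ↦ by
    rw [innerₗ_apply_apply, PiLp.inner_apply]
    exact sum_mem fun i _ ↦ hM (hx.1 i) _ (hz.1 i)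
  have LsubM_le_LsupN : LsubM M N k ≤ dualLat (LsupN N k) := fun x hx ↦
    mem_dualLat_LsupN.mpr (hN hx.2.2)
  have LsupN_le : LsupN N k ≤ dualLat (LsupN N k) := fun x ⟨y, hy, hx⟩ ↦ by
    rw [mem_dualLat_LsupN]
    exact sum_mem fun i _ ↦ hN (hx i ▸ hy)
  rw [LMN, dualLat_sup]
  exact sup_le (le_inf LsubM_le LsubM_le_LsupN)
    (le_inf (le_dualLat_comm.mp LsubM_le_LsupN) LsupN_le)

theorem dualLat_LMN_le (hM : dualLat M ≤ M) (hN : dualLat N ≤ N)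
    (h : dualLat (M ⊓ N) ≤ M ⊔ N) : dualLat (LMN M N k) ≤ LMN M N k := fun v hv ↦ by
  rw [LMN, dualLat_sup] at hv
  refine mem_LMN.mpr ⟨?_, hN (mem_dualLat_LsupN.mp hv.2)⟩
  obtain _ | ⟨⟨i₀⟩⟩ := isEmpty_or_nonempty (Fin k)
  · exact ⟨0, zero_mem N, isEmptyElim⟩
  obtain ⟨m, hm, y, hy, hv₀⟩ := Submodule.mem_sup.mp (h (apply_mem_dualLat_inf hv.1 i₀))
  refine ⟨y, hy, fun i ↦ ?_⟩
  have hvi : v i - y = (v i - v i₀) + m := by rw [← hv₀]; abel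
  rw [hvi]
  exact add_mem (hM (sub_mem_dualLat_left hv.1 i i₀)) hm

theorem dualLat_LMN (hM : dualLat M = M) (hN : dualLat N = N) (h : dualLat (M ⊓ N) ≤ M ⊔ N) :
    dualLat (LMN M N k) = LMN M N k :=
  le_antisymm (dualLat_LMN_le hM.le hN.le h) (LMN_le_dualLat hM.ge hN.ge)

end LMN

theorem statement2_general [FiniteDimensional ℝ V] {M N : Submodule ℤ V} (hM : dualLat M = M)
    (hN : dualLat N = N) (h : dualLat (M ⊓ N) ≤ M ⊔ N) (k : ℕ) :
    IsLat (LMN M N k) ∧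
    finrank ℤ (LMN M N k) = k * finrank ℝ V ∧
    ∀ (n : ℕ) (b : Basis (Fin n) ℤ (LMN M N k)),
      (Matrix.of fun i j : Fin n =>
        ⟪(b i : PiLp 2 fun _ : Fin k => V), (b j : PiLp 2 fun _ : Fin k => V)⟫).det = 1 := by
  have hself : dualLat (LMN M N k) = LMN M N k := dualLat_LMN hM hN h
  have hint := isIntegralLat_iff_le_dualLat.mpr hself.ge
  have := discreteTopology_of_inner_self_int fun x hx ↦ hint x hx x hx
  have : IsZLattice ℝ (LMN M N k) := ⟨span_real_eq_top_of_dualLat_le hself.le⟩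
  have hfinrank : finrank ℝ (PiLp 2 fun _ : Fin k ↦ V) = k * finrank ℝ V := by
    rw [(WithLp.linearEquiv 2 ℝ (Fin k → V)).finrank_eq, Module.finrank_pi_fintype]
    simp
  exact ⟨⟨ZLattice.FG ℝ _, IsZLattice.span_top⟩, (ZLattice.rank ℝ _).trans hfinrank,
    fun _ b ↦ det_gram_eq_one_of_dualLat_eq hself b⟩

/-- `L(M,N,k)` is a unimodular lattice in `V^k`: it is a full lattice, of rank
`k·dim V`, and the Gram matrix of any `ℤ`-basis has determinant 1. -/
theorem statement2 [FiniteDimensional ℝ V] (Υ M N : Submodule ℤ V) (hΥlat : IsLat Υ)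
    (hΥ : SqrtTwoEvenUnimod Υ) (hpol : IsPolarization Υ M N) (k : ℕ) (hk : 1 ≤ k) :
    IsLat (LMN M N k) ∧
    finrank ℤ (LMN M N k) = k * finrank ℝ V ∧
    ∀ (n : ℕ) (b : Basis (Fin n) ℤ (LMN M N k)),
      (Matrix.of fun i j : Fin n =>
        ⟪(b i : PiLp 2 fun _ : Fin k => V), (b j : PiLp 2 fun _ : Fin k => V)⟫).det = 1 := by
  have hΥdual := hΥ.dualLat_two_smul hΥlat.2
  exact statement2_general (hpol.dualLat_left hΥdual) (hpol.symm.dualLat_left hΥdual)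
    (hpol.dualLat_inf hΥdual).le k
end
end

section
/- Let V be a finite-dimensional real inner product space, Υ a lattice in V such that √2·Υ is even and unimodular, M, N a polarization of Υ, and k ≥ 2 an integer. Then μ(L_M) = 2·min(μ(M), 2μ(Υ)) and μ(L^N) = k·μ(N), where μ denotes minimum norm. -/
noncomputable section

open scoped RealInnerProductSpace Pointwise
open Module

variable {V : Type*} [NormedAddCommGroup V] [InnerProductSpace ℝ V]

/-!
A nonzero vector of `L_M` with two nonzero coordinates is at least as long as `(x, -x, 0, …, 0)`,
where `x` is the shorter of the two; if it has only one nonzero coordinate, that coordinate is the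
sum of all of them and so lies in `M ∩ N`. Hence `μ(L_M) = min(2μ(M), μ(M ∩ N))`, and
`μ(M ∩ N) = μ(2Υ) = 4μ(Υ)`. On the diagonal, the norm of `(y, …, y)` is `k⟪y, y⟫`.
-/

/-- The set of norms of nonzero vectors of `L`; its infimum is the minimum norm `minNorm L`. -/
def nonzeroNorms (L : Submodule ℤ V) : Set ℝ :=
  {r : ℝ | ∃ x ∈ L, x ≠ 0 ∧ ⟪x, x⟫ = r}

theorem minNorm_eq_sInf_nonzeroNorms (L : Submodule ℤ V) :
    minNorm L = sInf (nonzeroNorms L) :=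
  rfl

theorem inner_self_mem_nonzeroNorms {L : Submodule ℤ V} {x : V} (hx : x ∈ L) (hx0 : x ≠ 0) :
    ⟪x, x⟫ ∈ nonzeroNorms L :=
  ⟨x, hx, hx0, rfl⟩

theorem bddBelow_nonzeroNorms (L : Submodule ℤ V) : BddBelow (nonzeroNorms L) := by
  refine ⟨0, ?_⟩
  rintro _ ⟨x, -, -, rfl⟩
  exact real_inner_self_nonneg

theorem nonzeroNorms_nonempty_iff {L : Submodule ℤ V} : (nonzeroNorms L).Nonempty ↔ L ≠ ⊥ := by
  rw [Submodule.ne_bot_iff]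
  constructor
  · rintro ⟨_, x, hx, hx0, -⟩
    exact ⟨x, hx, hx0⟩
  · rintro ⟨x, hx, hx0⟩
    exact ⟨_, inner_self_mem_nonzeroNorms hx hx0⟩

/-- Junk value: the infimum of the empty set of reals is `0`. -/
theorem minNorm_bot : minNorm (⊥ : Submodule ℤ V) = 0 := by
  simp [minNorm]

theorem inner_self_zsmul (c : ℤ) (x : V) : ⟪c • x, c • x⟫ = (c : ℝ) ^ 2 * ⟪x, x⟫ := by
  rw [← Int.cast_smul_eq_zsmul ℝ c x, real_inner_smul_left, real_inner_smul_right]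
  ring

theorem nonzeroNorms_zsmul {c : ℤ} (hc : c ≠ 0) (L : Submodule ℤ V) :
    nonzeroNorms (c • L) = (c : ℝ) ^ 2 • nonzeroNorms L := by
  have : IsAddTorsionFree V := .of_isTorsionFree ℝ V
  ext r
  constructor
  · rintro ⟨_, hx, hx0, rfl⟩
    obtain ⟨y, hy, rfl⟩ := (Submodule.mem_smul_pointwise_iff_exists _ _ _).1 hx
    exact ⟨_, inner_self_mem_nonzeroNorms hy (right_ne_zero_of_smul hx0),
      (inner_self_zsmul c y).symm⟩
  · rintro ⟨_, ⟨y, hy, hy0, rfl⟩, rfl⟩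
    exact ⟨c • y, Submodule.smul_mem_pointwise_smul y c L hy, smul_ne_zero hc hy0,
      inner_self_zsmul c y⟩

theorem submodule_zsmul_ne_bot {c : ℤ} (hc : c ≠ 0) {L : Submodule ℤ V} (hL : L ≠ ⊥) :
    c • L ≠ ⊥ := by
  rw [← nonzeroNorms_nonempty_iff, nonzeroNorms_zsmul hc]
  exact (nonzeroNorms_nonempty_iff.2 hL).smul_set

theorem minNorm_zsmul {c : ℤ} (hc : c ≠ 0) (L : Submodule ℤ V) :
    minNorm (c • L) = (c : ℝ) ^ 2 * minNorm L := by
  rw [minNorm_eq_sInf_nonzeroNorms, nonzeroNorms_zsmul hc,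
    Real.sInf_smul_of_nonneg (sq_nonneg _), smul_eq_mul, minNorm_eq_sInf_nonzeroNorms]

section PiLpInner

variable {ι : Type*} [Fintype ι] {E : ι → Type*} [∀ i, NormedAddCommGroup (E i)]
  [∀ i, InnerProductSpace ℝ (E i)]

theorem inner_self_apply_le (v : PiLp 2 E) (i : ι) : ⟪v i, v i⟫ ≤ ⟪v, v⟫ := by
  rw [PiLp.inner_apply]
  exact Finset.single_le_sum (f := fun l => ⟪v l, v l⟫) (fun _ _ => real_inner_self_nonneg)
    (Finset.mem_univ i)

theorem inner_self_apply_add_inner_self_apply_le (v : PiLp 2 E) {i j : ι} (hij : i ≠ j) :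
    ⟪v i, v i⟫ + ⟪v j, v j⟫ ≤ ⟪v, v⟫ := by
  classical
  rw [PiLp.inner_apply, ← Finset.sum_pair (f := fun l => ⟪v l, v l⟫) hij]
  exact Finset.sum_le_sum_of_subset_of_nonneg (Finset.subset_univ _)
    fun _ _ _ => real_inner_self_nonneg

theorem inner_self_of_forall_apply_eq {v : PiLp 2 fun _ : ι => V} {y : V}
    (hv : ∀ i, v i = y) : ⟪v, v⟫ = Fintype.card ι * ⟪y, y⟫ := by
  simp only [PiLp.inner_apply, hv, Finset.sum_const, Finset.card_univ, nsmul_eq_mul]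

variable [DecidableEq ι]

theorem inner_piLp_single_left (i : ι) (x : E i) (v : PiLp 2 E) :
    ⟪PiLp.single 2 i x, v⟫ = ⟪x, v i⟫ := by
  rw [PiLp.inner_apply, Fintype.sum_eq_single i fun j hj => by
    rw [PiLp.single_eq_of_ne _ hj, inner_zero_left], PiLp.single_eq_same]

end PiLpInner

section LsubMMembership

variable {W : Type*} [NormedAddCommGroup W] {M N : Submodule ℤ W} {k : ℕ}

theorem LsubM_bot_left : LsubM ⊥ N k = ⊥ :=
  (Submodule.eq_bot_iff _).2 fun _ hv => PiLp.ext hv.1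

theorem apply_mem_inf_of_forall_ne_eq_zero {v : PiLp 2 fun _ : Fin k => W}
    (hv : v ∈ LsubM M N k) {i : Fin k} (h : ∀ j, j ≠ i → v j = 0) : v i ∈ M ⊓ N := by
  rw [← Fintype.sum_eq_single i h]
  exact hv.2

theorem piLp_single_apply_mem {ι : Type*} [DecidableEq ι] {x : W} (hx : x ∈ M) (i j : ι) :
    PiLp.single (β := fun _ => W) 2 i x j ∈ M := by
  rcases eq_or_ne j i with rfl | hji
  · rwa [PiLp.single_eq_same]
  · rw [PiLp.single_eq_of_ne 2 hji]
    exact M.zero_mem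

theorem single_mem_LsubM {x : W} (hx : x ∈ M ⊓ N) (i : Fin k) :
    PiLp.single 2 i x ∈ LsubM M N k :=
  ⟨piLp_single_apply_mem hx.1 i, by simpa using hx⟩

theorem single_sub_single_mem_LsubM {x : W} (hx : x ∈ M) (i j : Fin k) :
    PiLp.single 2 i x - PiLp.single 2 j x ∈ LsubM M N k :=
  ⟨fun l => M.sub_mem (piLp_single_apply_mem hx i l) (piLp_single_apply_mem hx j l), by simp⟩

end LsubMMembership

section LsubMMinNorm

variable {M N : Submodule ℤ V} {k : ℕ}

theorem nonzeroNorms_inf_subset_nonzeroNorms_LsubM (hk : 0 < k) :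
    nonzeroNorms (M ⊓ N) ⊆ nonzeroNorms (LsubM M N k) := by
  rintro _ ⟨x, hx, hx0, rfl⟩
  let i : Fin k := ⟨0, hk⟩
  refine ⟨PiLp.single 2 i x, single_mem_LsubM hx i, (PiLp.single_eq_zero_iff 2 i).not.2 hx0, ?_⟩
  rw [inner_piLp_single_left, PiLp.single_eq_same]

theorem two_smul_nonzeroNorms_subset_nonzeroNorms_LsubM (hk : 2 ≤ k) :
    (2 : ℝ) • nonzeroNorms M ⊆ nonzeroNorms (LsubM M N k) := by
  rintro _ ⟨_, ⟨x, hx, hx0, rfl⟩, rfl⟩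
  have : Nontrivial (Fin k) := Fin.nontrivial_iff_two_le.2 hk
  obtain ⟨i, j, hij⟩ := exists_pair_ne (Fin k)
  have hnorm : ⟪PiLp.single 2 i x - PiLp.single 2 j x,
      (PiLp.single 2 i x - PiLp.single 2 j x : PiLp 2 fun _ : Fin k => V)⟫ = 2 * ⟪x, x⟫ := by
    simp only [inner_sub_left, inner_piLp_single_left, PiLp.sub_apply, PiLp.single_eq_same,
      PiLp.single_eq_of_ne _ hij, PiLp.single_eq_of_ne _ hij.symm, zero_sub, sub_zero,
      inner_neg_right, sub_neg_eq_add, two_mul]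
  refine ⟨_, single_sub_single_mem_LsubM hx i j, fun h => ?_, hnorm⟩
  rw [h, inner_zero_left] at hnorm
  exact hx0 ((inner_self_eq_zero (𝕜 := ℝ)).1 (by linarith))

theorem isCoinitialFor_nonzeroNorms_LsubM :
    IsCoinitialFor (nonzeroNorms (LsubM M N k))
      ((2 : ℝ) • nonzeroNorms M ∪ nonzeroNorms (M ⊓ N)) := by
  rintro _ ⟨v, hv, hv0, rfl⟩
  obtain ⟨i, hi⟩ : ∃ i, v i ≠ 0 := by
    by_contra! h
    exact hv0 (PiLp.ext h)
  by_cases hsupp : ∀ j, j ≠ i → v j = 0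
  · exact ⟨_, .inr (inner_self_mem_nonzeroNorms (apply_mem_inf_of_forall_ne_eq_zero hv hsupp) hi),
      inner_self_apply_le v i⟩
  · push Not at hsupp
    obtain ⟨j, hji, hj⟩ := hsupp
    wlog hle : ⟪v i, v i⟫ ≤ ⟪v j, v j⟫ generalizing i j
    · exact this j hj i hji.symm hi (le_of_not_ge hle)
    have hadd := inner_self_apply_add_inner_self_apply_le v hji.symm
    exact ⟨2 * ⟪v i, v i⟫,
      .inl (Set.smul_mem_smul_set (inner_self_mem_nonzeroNorms (hv.1 i) hi)), by linarith⟩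

theorem minNorm_LsubM (hMN : M ⊓ N ≠ ⊥) (hk : 2 ≤ k) :
    minNorm (LsubM M N k) = min (2 * minNorm M) (minNorm (M ⊓ N)) := by
  have hM : M ≠ ⊥ := ne_bot_of_le_ne_bot hMN inf_le_left
  have hsub : (2 : ℝ) • nonzeroNorms M ∪ nonzeroNorms (M ⊓ N) ⊆ nonzeroNorms (LsubM M N k) :=
    Set.union_subset (two_smul_nonzeroNorms_subset_nonzeroNorms_LsubM hk)
      (nonzeroNorms_inf_subset_nonzeroNorms_LsubM (by lia))
  calc
    minNorm (LsubM M N k) = sInf ((2 : ℝ) • nonzeroNorms M ∪ nonzeroNorms (M ⊓ N)) :=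
      csInf_eq_csInf_of_forall_exists_le isCoinitialFor_nonzeroNorms_LsubM
        (IsCoinitialFor.of_subset hsub)
    _ = min (sInf ((2 : ℝ) • nonzeroNorms M)) (sInf (nonzeroNorms (M ⊓ N))) :=
      csInf_union ((bddBelow_nonzeroNorms _).mono (Set.subset_union_left.trans hsub))
        (nonzeroNorms_nonempty_iff.2 hM).smul_set (bddBelow_nonzeroNorms _)
        (nonzeroNorms_nonempty_iff.2 hMN)
    _ = min (2 * minNorm M) (minNorm (M ⊓ N)) := by
      rw [Real.sInf_smul_of_nonneg zero_le_two, smul_eq_mul, minNorm_eq_sInf_nonzeroNorms,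
        minNorm_eq_sInf_nonzeroNorms]

end LsubMMinNorm

section LsupN

variable {k : ℕ}

theorem nonzeroNorms_LsupN (N : Submodule ℤ V) (hk : 0 < k) :
    nonzeroNorms (LsupN N k) = (k : ℝ) • nonzeroNorms N := by
  have hnorm {v : PiLp 2 fun _ : Fin k => V} {y : V} (hv : ∀ i, v i = y) :
      ⟪v, v⟫ = k * ⟪y, y⟫ := by
    rw [inner_self_of_forall_apply_eq hv, Fintype.card_fin]
  ext r
  constructor
  · rintro ⟨v, ⟨y, hy, hvy⟩, hv0, rfl⟩
    have hy0 : y ≠ 0 := fun h => hv0 (PiLp.ext fun i => (hvy i).trans h)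
    exact ⟨_, inner_self_mem_nonzeroNorms hy hy0, (hnorm hvy).symm⟩
  · rintro ⟨_, ⟨y, hy, hy0, rfl⟩, rfl⟩
    exact ⟨WithLp.toLp 2 fun _ => y, ⟨y, hy, fun _ => rfl⟩,
      fun h => hy0 (congrArg (fun v => v ⟨0, hk⟩) h),
      hnorm fun _ => rfl⟩

theorem minNorm_LsupN (N : Submodule ℤ V) (hk : 0 < k) :
    minNorm (LsupN N k) = k * minNorm N := by
  rw [minNorm_eq_sInf_nonzeroNorms, nonzeroNorms_LsupN N hk,
    Real.sInf_smul_of_nonneg k.cast_nonneg, smul_eq_mul, minNorm_eq_sInf_nonzeroNorms]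

end LsupN

theorem statement3_general (Υ M N : Submodule ℤ V) (hM : M ≤ Υ)
    (hinf : M ⊓ N = (2 : ℤ) • Υ) (k : ℕ) (hk : 2 ≤ k) :
    minNorm (LsubM M N k) = 2 * min (minNorm M) (2 * minNorm Υ) ∧
    minNorm (LsupN N k) = (k : ℝ) * minNorm N := by
  refine ⟨?_, minNorm_LsupN N (by lia)⟩
  rcases eq_or_ne Υ ⊥ with rfl | hΥ
  · rw [le_bot_iff.1 hM, LsubM_bot_left, minNorm_bot, minNorm_bot]
    simp
  calc
    minNorm (LsubM M N k) = min (2 * minNorm M) (minNorm (M ⊓ N)) :=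
      minNorm_LsubM (hinf ▸ submodule_zsmul_ne_bot two_ne_zero hΥ) hk
    _ = min (2 * minNorm M) (2 * (2 * minNorm Υ)) := by
      rw [hinf, minNorm_zsmul two_ne_zero]
      norm_num [← mul_assoc]
    _ = 2 * min (minNorm M) (2 * minNorm Υ) := (mul_min_of_nonneg _ _ zero_le_two).symm

/-- `μ(L_M) = 2·min(μ(M), 2μ(Υ))` and `μ(L^N) = k·μ(N)`. -/
theorem statement3 (Υ M N : Submodule ℤ V) (hΥlat : IsLat Υ)
    (hΥ : SqrtTwoEvenUnimod Υ) (hpol : IsPolarization Υ M N) (k : ℕ) (hk : 2 ≤ k) :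
    minNorm (LsubM M N k) = 2 * min (minNorm M) (2 * minNorm Υ) ∧
    minNorm (LsupN N k) = (k : ℝ) * minNorm N :=
  statement3_general Υ M N hpol.1 hpol.2.2.2.2.2 k hk
end
end

section
/- Let E be an even unimodular lattice of rank 8 in an 8-dimensional real inner product space (an E8-lattice). Then E has an even polarization: there exist sublattices X, Y ⊆ E such that X + Y = E, X ∩ Y = 2E, and ⟪x,x⟫ ∈ 4ℤ for every x ∈ X and every x ∈ Y. -/
noncomputable section

open scoped RealInnerProductSpace Pointwise
open Module

variable {V : Type*} [NormedAddCommGroup V] [InnerProductSpace ℝ V]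

/-!
Half the norm of `E` is an integral quadratic form `Q`, and an even polarization of `E` is the same
as a decomposition of `E / 2E` into two totally singular subspaces of `Q` modulo `2`. It exists
exactly when `Q` modulo `2` has Arf invariant `0`, and the Arf invariant is visible in the Gram
determinant modulo `8`: over `ℤ / 8` the lattice is an orthogonal sum of planes, with half-norm
forms `a x² + c x y + b y²`, `c` odd, of determinant `4 a b - c² = 4 a b - 1`. This is `-1` for the
planes that are hyperbolic modulo `2` and `3` for the anisotropic ones, so a determinant `±1` forces
the number of anisotropic planes to be even, and two anisotropic planes together are again
decomposable.
-/

open Matrix QuadraticMap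

section Polarizable

variable {R M M₁ M₂ M₃ : Type*} [CommRing R] [AddCommGroup M] [Module R M]
  [AddCommGroup M₁] [Module R M₁] [AddCommGroup M₂] [Module R M₂] [AddCommGroup M₃] [Module R M₃]

/-- A quadratic form is polarizable if its module is the direct sum of two totally singular
submodules. A nondegenerate form over `𝔽₂` is polarizable exactly when its Arf invariant is `0`. -/
def IsPolarizable (Q : QuadraticForm R M) : Prop :=
  ∃ X Y : Submodule R M, IsCompl X Y ∧ (∀ x ∈ X, Q x = 0) ∧ ∀ y ∈ Y, Q y = 0

theorem isPolarizable_of_subsingleton [Subsingleton M] (Q : QuadraticForm R M) :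
    IsPolarizable Q := by
  have hQ (x : M) : Q x = 0 := by rw [Subsingleton.elim x 0, map_zero]
  exact ⟨⊥, ⊤, isCompl_bot_top, fun x _ => hQ x, fun y _ => hQ y⟩

theorem IsPolarizable.of_equivalent {Q₁ : QuadraticForm R M₁} {Q₂ : QuadraticForm R M₂}
    (h : IsPolarizable Q₂) (e : Q₁.Equivalent Q₂) : IsPolarizable Q₁ := by
  obtain ⟨X, Y, hXY, hX, hY⟩ := h
  obtain ⟨e⟩ := e.symm
  refine ⟨_, _, (Submodule.orderIsoMapComap e.toLinearEquiv).isCompl hXY, ?_, ?_⟩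
  · rintro _ ⟨x, hx, rfl⟩
    exact (e.map_app x).trans (hX x hx)
  · rintro _ ⟨y, hy, rfl⟩
    exact (e.map_app y).trans (hY y hy)

theorem IsPolarizable.prod {Q₁ : QuadraticForm R M₁} {Q₂ : QuadraticForm R M₂}
    (h₁ : IsPolarizable Q₁) (h₂ : IsPolarizable Q₂) : IsPolarizable (Q₁.prod Q₂) := by
  obtain ⟨X₁, Y₁, hXY₁, hX₁, hY₁⟩ := h₁
  obtain ⟨X₂, Y₂, hXY₂, hX₂, hY₂⟩ := h₂
  refine ⟨X₁.prod X₂, Y₁.prod Y₂, .of_eq ?_ ?_, fun x hx => ?_, fun y hy => ?_⟩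
  · rw [Submodule.prod_inf_prod, hXY₁.inf_eq_bot, hXY₂.inf_eq_bot, Submodule.prod_bot]
  · rw [Submodule.prod_sup_prod, hXY₁.sup_eq_top, hXY₂.sup_eq_top, Submodule.prod_top]
  · rw [QuadraticMap.prod_apply, hX₁ _ hx.1, hX₂ _ hx.2, add_zero]
  · rw [QuadraticMap.prod_apply, hY₁ _ hy.1, hY₂ _ hy.2, add_zero]

theorem isCompl_graph {f g : M₁ →ₗ[R] M₂} (h : Function.Bijective (f - g)) :
    IsCompl f.graph g.graph := by
  refine ⟨Submodule.disjoint_def.2 ?_, codisjoint_iff.2 (eq_top_iff.2 ?_)⟩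
  · rintro ⟨x, y⟩ (hf : y = f x) (hg : y = g x)
    have hx : x = 0 := h.injective (by simp [← hf, ← hg])
    simp [hf, hx]
  · rintro ⟨x, y⟩ -
    obtain ⟨u, hu : f u - g u = y - g x⟩ := h.surjective (y - g x)
    have hsum : (x, y) = (u, f u) + (x - u, g (x - u)) := by
      rw [Prod.mk_add_mk, map_sub, add_sub_cancel, ← add_sub_assoc, add_sub_right_comm, hu,
        sub_add_cancel]
    exact hsum ▸ Submodule.add_mem_sup rfl rfl

theorem isPolarizable_prod_of_bijective_sub {Q₁ : QuadraticForm R M₁} {Q₂ : QuadraticForm R M₂}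
    {f g : M₁ →ₗ[R] M₂} (hf : ∀ x, Q₂ (f x) = -Q₁ x) (hg : ∀ x, Q₂ (g x) = -Q₁ x)
    (hfg : Function.Bijective (f - g)) : IsPolarizable (Q₁.prod Q₂) := by
  refine ⟨f.graph, g.graph, isCompl_graph hfg, ?_, ?_⟩
  · rintro ⟨x, y⟩ (rfl : y = f x)
    rw [QuadraticMap.prod_apply, hf, add_neg_cancel]
  · rintro ⟨x, y⟩ (rfl : y = g x)
    rw [QuadraticMap.prod_apply, hg, add_neg_cancel]

theorem equivalent_prod_assoc (Q₁ : QuadraticForm R M₁) (Q₂ : QuadraticForm R M₂)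
    (Q₃ : QuadraticForm R M₃) :
    (Q₁.prod (Q₂.prod Q₃)).Equivalent ((Q₁.prod Q₂).prod Q₃) :=
  ⟨{ (LinearEquiv.prodAssoc R M₁ M₂ M₃).symm with map_app' _ := add_assoc _ _ _ }⟩

theorem equivalent_prod_left_comm (Q₁ : QuadraticForm R M₁) (Q₂ : QuadraticForm R M₂)
    (Q₃ : QuadraticForm R M₃) :
    (Q₁.prod (Q₂.prod Q₃)).Equivalent (Q₂.prod (Q₁.prod Q₃)) :=
  (equivalent_prod_assoc Q₁ Q₂ Q₃).trans <|
    (Equivalent.prod ⟨.prodComm Q₁ Q₂⟩ (.refl Q₃)).trans (equivalent_prod_assoc Q₂ Q₁ Q₃).symm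

end Polarizable

section PlaneForm

variable {R : Type*} [CommRing R]

/-- The binary quadratic form `a x² + x y + b y²`. Over `𝔽₂` these are the nondegenerate planes:
hyperbolic if `a b = 0`, and anisotropic if `a = b = 1`. -/
def planeForm (a b : R) : QuadraticForm R (R × R) :=
  a • linMulLin (.fst R R R) (.fst R R R) + linMulLin (.fst R R R) (.snd R R R) +
    b • linMulLin (.snd R R R) (.snd R R R)

theorem planeForm_apply (a b : R) (v : R × R) :
    planeForm a b v = a * (v.1 * v.1) + v.1 * v.2 + b * (v.2 * v.2) := rfl

theorem isPolarizable_planeForm_zero_zero : IsPolarizable (planeForm (0 : R) 0) := by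
  refine ⟨_, _, LinearMap.isCompl_range_inl_inr, ?_, ?_⟩ <;> rintro _ ⟨x, rfl⟩ <;>
    simp [planeForm_apply]

/-- When `a b = 0` the form factors as `(x + b y) (a x + y)`. -/
theorem planeForm_equivalent_zero_zero {a b : R} (hab : a * b = 0) :
    (planeForm a b).Equivalent (planeForm 0 0) := by
  let factors : (R × R) ≃ₗ[R] R × R :=
    LinearEquiv.ofLinearMap
      (.prod (.fst R R R + b • .snd R R R) (a • .fst R R R + .snd R R R))
      (.prod (.fst R R R - b • .snd R R R) (.snd R R R - a • .fst R R R))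
      (by ext <;> simp [mul_comm b a, hab]) (by ext <;> simp [mul_comm b a, hab])
  refine ⟨{ factors with map_app' := fun v => ?_ }⟩
  change planeForm 0 0 (v.1 + b * v.2, a * v.1 + v.2) = planeForm a b v
  simp only [planeForm_apply]
  linear_combination v.1 * v.2 * hab

theorem isPolarizable_planeForm {a b : R} (hab : a * b = 0) : IsPolarizable (planeForm a b) :=
  isPolarizable_planeForm_zero_zero.of_equivalent (planeForm_equivalent_zero_zero hab)

/-- The two summands are the graphs of the identity and of the isometry `(x, y) ↦ (y, x + y)`
of order three, which has no nonzero fixed vector. -/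
theorem isPolarizable_planeForm_one_one_prod_self [CharP R 2] :
    IsPolarizable ((planeForm (1 : R) 1).prod (planeForm 1 1)) := by
  let ω : R × R →ₗ[R] R × R := .prod (.snd R R R) (.fst R R R + .snd R R R)
  have hω (v : R × R) : planeForm 1 1 (ω v) = -planeForm 1 1 v := by
    change planeForm 1 1 (v.2, v.1 + v.2) = -planeForm 1 1 v
    simp only [planeForm_apply]
    linear_combination
      (v.1 * v.1 + 2 * (v.1 * v.2) + 2 * (v.2 * v.2)) * CharTwo.two_eq_zero (R := R)
  refine isPolarizable_prod_of_bijective_sub (f := .id) (g := ω)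
    (fun v => (CharTwo.neg_eq _).symm) hω ?_
  refine Function.bijective_iff_has_inverse.2
    ⟨fun w => (-w.2, -w.1 - w.2), fun v => ?_, fun w => ?_⟩
  · ext <;> simp [ω]
  · ext <;> simp [ω, neg_sub_left]

end PlaneForm

section MatrixForm

variable {R K ι κ m : Type*} [CommRing R] [CommRing K] [Fintype ι] [Fintype κ] [Fintype m]
  [DecidableEq ι] [DecidableEq κ] [DecidableEq m]

theorem toQuadraticForm'_apply (U : Matrix ι ι R) (x : ι → R) :
    U.toQuadraticForm' x = x ⬝ᵥ U *ᵥ x :=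
  Matrix.toLinearMap₂'_apply' U x x

theorem toQuadraticForm'_submatrix_equivalent (U : Matrix ι ι R) (e : κ ≃ ι) :
    (U.submatrix e e).toQuadraticForm'.Equivalent U.toQuadraticForm' := by
  refine ⟨{ LinearEquiv.funCongrLeft R R e.symm with map_app' := fun x => ?_ }⟩
  change U.toQuadraticForm' (x ∘ e.symm) = _
  rw [toQuadraticForm'_apply, toQuadraticForm'_apply, submatrix_mulVec_equiv,
    ← comp_equiv_symm_dotProduct]

theorem toQuadraticForm'_congr_equivalent (U : Matrix ι ι R) {P : Matrix ι ι R}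
    (hP : IsUnit P.det) : (Pᵀ * U * P).toQuadraticForm'.Equivalent U.toQuadraticForm' := by
  let := P.invertibleOfIsUnitDet hP
  refine ⟨{ P.toLinearEquiv' ‹_› with map_app' := fun x => ?_ }⟩
  change U.toQuadraticForm' (P *ᵥ x) = _
  rw [toQuadraticForm'_apply, toQuadraticForm'_apply, ← mulVec_mulVec, ← mulVec_mulVec,
    dotProduct_mulVec x, vecMul_transpose]

theorem toQuadraticForm'_fromBlocks_equivalent_prod (U : Matrix m m R) (Z : Matrix m κ R)
    (S : Matrix κ κ R) :
    (fromBlocks U Z (-Zᵀ) S).toQuadraticForm'.Equivalent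
      (U.toQuadraticForm'.prod S.toQuadraticForm') := by
  refine ⟨{ LinearEquiv.sumArrowLequivProdArrow m κ R R with map_app' := fun x => ?_ }⟩
  change U.toQuadraticForm' (x ∘ Sum.inl) + S.toQuadraticForm' (x ∘ Sum.inr) = _
  have cross : (x ∘ Sum.inr) ⬝ᵥ Zᵀ *ᵥ (x ∘ Sum.inl) = (x ∘ Sum.inl) ⬝ᵥ Z *ᵥ (x ∘ Sum.inr) := by
    rw [mulVec_transpose, dotProduct_comm, ← dotProduct_mulVec]
  simp only [toQuadraticForm'_apply]
  conv_rhs => rw [← Sum.elim_comp_inl_inr x, fromBlocks_mulVec, sumElim_dotProduct_sumElim]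
  simp only [Sum.elim_comp_inl, Sum.elim_comp_inr, dotProduct_add, neg_mulVec, dotProduct_neg,
    cross]
  abel

theorem toQuadraticForm'_equivalent_planeForm {U : Matrix (Fin 2) (Fin 2) R}
    (hU : U 0 1 + U 1 0 = 1) : U.toQuadraticForm'.Equivalent (planeForm (U 0 0) (U 1 1)) := by
  refine ⟨{ LinearEquiv.finTwoArrow R R with map_app' := fun x => ?_ }⟩
  change planeForm (U 0 0) (U 1 1) (x 0, x 1) = _
  simp only [planeForm_apply, toQuadraticForm'_apply, dotProduct, mulVec, Fin.sum_univ_two]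
  linear_combination -(x 0 * x 1 * hU)

/-- `P` projects the second block of coordinates to the orthogonal complement of the first for
the polar form, whose matrix is `U + Uᵀ`. -/
theorem exists_transpose_mul_mul_eq_fromBlocks (U : Matrix (m ⊕ κ) (m ⊕ κ) R)
    (hU : IsUnit (U.toBlocks₁₁ + U.toBlocks₁₁ᵀ).det) :
    ∃ (P : Matrix (m ⊕ κ) (m ⊕ κ) R) (Z : Matrix m κ R) (S : Matrix κ κ R),
      P.det = 1 ∧ Pᵀ * U * P = fromBlocks U.toBlocks₁₁ Z (-Zᵀ) S := by
  obtain ⟨A, B, C, D, rfl⟩ : ∃ A B C D, U = fromBlocks A B C D :=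
    ⟨_, _, _, _, (fromBlocks_toBlocks U).symm⟩
  rw [toBlocks_fromBlocks₁₁] at hU ⊢
  obtain ⟨L, hL⟩ : ∃ L, (A + Aᵀ) * L = B + Cᵀ := ⟨_, mul_nonsing_inv_cancel_left _ _ hU⟩
  refine ⟨fromBlocks 1 (-L) 0 1, B - A * L, -(Lᵀ * (B - A * L)) + (D - C * L), by simp, ?_⟩
  have hLt : Lᵀ * Aᵀ + Lᵀ * A = Bᵀ + C := by
    simpa [Matrix.mul_add] using congrArg transpose hL
  have corner : C - Lᵀ * A = -(B - A * L)ᵀ := by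
    rw [transpose_sub, transpose_mul, neg_sub, sub_eq_sub_iff_add_eq_add, hLt, add_comm]
  simp only [fromBlocks_transpose, fromBlocks_multiply, ← corner]
  congr 1
  · simp
  · simp only [transpose_one, Matrix.one_mul, Matrix.mul_one, transpose_zero, Matrix.zero_mul,
      Matrix.mul_neg, add_zero]
    abel
  · simp only [transpose_neg, transpose_one, Matrix.neg_mul, Matrix.one_mul, Matrix.mul_one,
      Matrix.mul_zero, add_zero]
    abel
  · simp only [transpose_neg, transpose_one, Matrix.neg_mul, Matrix.one_mul, Matrix.mul_one,
      Matrix.mul_neg, Matrix.add_mul, Matrix.mul_sub, Matrix.mul_assoc]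
    abel

/-- The hypothesis says that the polar form of `U` is nondegenerate on the coordinate subspace
selected by `f`. -/
theorem exists_orthogonal_split (φ : R →+* K) (U : Matrix ι ι R) (f : m ↪ ι)
    (hf : IsUnit (U.submatrix f f + (U.submatrix f f)ᵀ).det) :
    ∃ S : Matrix ↥(Set.range f)ᶜ ↥(Set.range f)ᶜ R,
      (U + Uᵀ).det = (U.submatrix f f + (U.submatrix f f)ᵀ).det * (S + Sᵀ).det ∧
      (U.map φ).toQuadraticForm'.Equivalent
        (((U.submatrix f f).map φ).toQuadraticForm'.prod (S.map φ).toQuadraticForm') := by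
  let e : m ⊕ ↥(Set.range f)ᶜ ≃ ι :=
    ((Equiv.ofInjective f f.injective).sumCongr (.refl _)).trans (Equiv.Set.sumCompl (Set.range f))
  have hblock : (U.submatrix e e).toBlocks₁₁ = U.submatrix f f := rfl
  obtain ⟨P, Z, S, hP, hPU⟩ := exists_transpose_mul_mul_eq_fromBlocks (U.submatrix e e) hf
  rw [hblock] at hPU
  refine ⟨S, ?_, ?_⟩
  · have hpolar : Pᵀ * (U + Uᵀ).submatrix e e * P =
        fromBlocks (U.submatrix f f + (U.submatrix f f)ᵀ) 0 0 (S + Sᵀ) := by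
      have hsum : (U + Uᵀ).submatrix e e = U.submatrix e e + (U.submatrix e e)ᵀ := rfl
      have htranspose : Pᵀ * (U.submatrix e e)ᵀ * P = (Pᵀ * U.submatrix e e * P)ᵀ := by
        simp [transpose_mul, Matrix.mul_assoc]
      rw [hsum, Matrix.mul_add, Matrix.add_mul, htranspose, hPU, fromBlocks_transpose,
        fromBlocks_add]
      simp
    have hdet := congrArg det hpolar
    rwa [det_mul, det_mul, det_transpose, hP, one_mul, mul_one, det_submatrix_equiv_self,
      det_fromBlocks_zero₂₁] at hdet
  · have hPφ : IsUnit (P.map φ).det := by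
      rw [← RingHom.mapMatrix_apply, ← RingHom.map_det, hP, map_one]
      exact isUnit_one
    have hmap : (P.map φ)ᵀ * (U.map φ).submatrix e e * P.map φ =
        fromBlocks ((U.submatrix f f).map φ) (Z.map φ) (-(Z.map φ)ᵀ) (S.map φ) := by
      have hneg : (-Zᵀ).map φ = -(Z.map φ)ᵀ := Matrix.ext fun _ _ => map_neg φ _
      rw [← hneg, ← fromBlocks_map, ← hPU, Matrix.map_mul, Matrix.map_mul, transpose_map,
        submatrix_map]
    have hcongr := toQuadraticForm'_congr_equivalent ((U.map φ).submatrix e e) hPφ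
    rw [hmap] at hcongr
    exact (toQuadraticForm'_submatrix_equivalent (U.map φ) e).symm.trans <|
      hcongr.symm.trans (toQuadraticForm'_fromBlocks_equivalent_prod _ _ _)

theorem exists_isUnit_apply_of_isUnit_det [IsLocalRing R] {G : Matrix ι ι R} (hG : IsUnit G.det)
    (i : ι) : ∃ j, IsUnit (G i j) := by
  by_contra! hrow
  refine (IsLocalRing.mem_maximalIdeal _).1 ?_ hG
  rw [det_eq_sum_mul_adjugate_row G i]
  exact Ideal.sum_mem _ fun j _ => Ideal.mul_mem_right _ _ (hrow j)

end MatrixForm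

section ArfInvariant

/-- Reduction modulo `2` of residues modulo `8`. -/
abbrev reduceModTwo : ZMod 8 →+* ZMod 2 :=
  ZMod.castHom (by decide : 2 ∣ 8) (ZMod 2)

/-- The quadratic form `x ↦ xᵀ U x` modulo `2`. -/
def modTwoForm {ι : Type*} [Fintype ι] [DecidableEq ι] (U : Matrix ι ι (ZMod 8)) :
    QuadraticForm (ZMod 2) (ι → ZMod 2) :=
  (U.map reduceModTwo).toQuadraticForm'

/-- `HasArfDiscriminant Q d` says that the residue `d` modulo `8` detects the Arf invariant of `Q`:
either `d = ±1` and `Q` is polarizable, or `d = ±3` and `Q` becomes polarizable after adding an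
anisotropic plane. -/
def HasArfDiscriminant {M : Type*} [AddCommGroup M] [Module (ZMod 2) M]
    (Q : QuadraticForm (ZMod 2) M) (d : ZMod 8) : Prop :=
  (d = 1 ∨ d = -1) ∧ IsPolarizable Q ∨
    (d = 3 ∨ d = -3) ∧ IsPolarizable ((planeForm 1 1).prod Q)

variable {M M₁ M₂ : Type*} [AddCommGroup M] [Module (ZMod 2) M] [AddCommGroup M₁]
  [Module (ZMod 2) M₁] [AddCommGroup M₂] [Module (ZMod 2) M₂]

theorem HasArfDiscriminant.of_equivalent {Q₁ : QuadraticForm (ZMod 2) M₁}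
    {Q₂ : QuadraticForm (ZMod 2) M₂} {d : ZMod 8} (h : HasArfDiscriminant Q₂ d)
    (e : Q₁.Equivalent Q₂) : HasArfDiscriminant Q₁ d :=
  h.imp (.imp_right (.of_equivalent · e)) (.imp_right (.of_equivalent · (.prod (.refl _) e)))

theorem HasArfDiscriminant.planeForm_prod {Q : QuadraticForm (ZMod 2) M} {d : ZMod 8}
    (h : HasArfDiscriminant Q d) {a b : ZMod 2} (hab : a * b = 0) :
    HasArfDiscriminant ((planeForm a b).prod Q) (-1 * d) := by
  rcases h with ⟨hd, hQ⟩ | ⟨hd, hQ⟩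
  · exact .inl ⟨by rcases hd with rfl | rfl <;> decide, (isPolarizable_planeForm hab).prod hQ⟩
  · exact .inr ⟨by rcases hd with rfl | rfl <;> decide,
      ((isPolarizable_planeForm hab).prod hQ).of_equivalent (equivalent_prod_left_comm _ _ _)⟩

theorem HasArfDiscriminant.planeForm_one_one_prod {Q : QuadraticForm (ZMod 2) M} {d : ZMod 8}
    (h : HasArfDiscriminant Q d) : HasArfDiscriminant ((planeForm 1 1).prod Q) (3 * d) := by
  rcases h with ⟨hd, hQ⟩ | ⟨hd, hQ⟩
  · exact .inr ⟨by rcases hd with rfl | rfl <;> decide,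
      (isPolarizable_planeForm_one_one_prod_self.prod hQ).of_equivalent
        (equivalent_prod_assoc _ _ _)⟩
  · exact .inl ⟨by rcases hd with rfl | rfl <;> decide, hQ⟩

theorem isLocalRing_zmod_eight : IsLocalRing (ZMod 8) :=
  have : Nontrivial (ZMod 8) := ⟨0, 1, by decide⟩
  .of_isUnit_or_isUnit_one_sub_self (by decide)

theorem sq_eq_one_of_isUnit_zmod_eight : ∀ {c : ZMod 8}, IsUnit c → c ^ 2 = 1 := by
  decide

theorem det_add_transpose_fin_two {U : Matrix (Fin 2) (Fin 2) (ZMod 8)}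
    (hU : IsUnit (U 0 1 + U 1 0)) : (U + Uᵀ).det = 4 * (U 0 0 * U 1 1) - 1 := by
  rw [det_fin_two]
  simp only [Matrix.add_apply, transpose_apply]
  linear_combination -sq_eq_one_of_isUnit_zmod_eight hU

theorem HasArfDiscriminant.modTwoForm_prod {U : Matrix (Fin 2) (Fin 2) (ZMod 8)}
    (hU : IsUnit (U 0 1 + U 1 0)) {Q : QuadraticForm (ZMod 2) M} {d : ZMod 8}
    (hQ : HasArfDiscriminant Q d) :
    HasArfDiscriminant ((modTwoForm U).prod Q) ((U + Uᵀ).det * d) := by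
  have hplane : (modTwoForm U).Equivalent
      (planeForm (reduceModTwo (U 0 0)) (reduceModTwo (U 1 1))) := by
    have hunit : reduceModTwo (U 0 1) + reduceModTwo (U 1 0) = 1 := by
      rw [← map_add]
      exact (by decide : ∀ a : ZMod 2, IsUnit a → a = 1) _ (hU.map reduceModTwo)
    exact toQuadraticForm'_equivalent_planeForm hunit
  refine HasArfDiscriminant.of_equivalent ?_ (.prod hplane (.refl Q))
  rw [det_add_transpose_fin_two hU]
  have hparity : ∀ a b : ZMod 8,
      reduceModTwo a * reduceModTwo b = 0 ∧ 4 * (a * b) - 1 = -1 ∨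
        reduceModTwo a = 1 ∧ reduceModTwo b = 1 ∧ 4 * (a * b) - 1 = 3 := by
    decide
  rcases hparity (U 0 0) (U 1 1) with ⟨hab, hdet⟩ | ⟨ha, hb, hdet⟩
  · rw [hdet]
    exact hQ.planeForm_prod hab
  · rw [hdet, ha, hb]
    exact hQ.planeForm_one_one_prod

theorem hasArfDiscriminant_modTwoForm {ι : Type*} [Fintype ι] [DecidableEq ι]
    (U : Matrix ι ι (ZMod 8)) (hU : IsUnit (U + Uᵀ).det) :
    HasArfDiscriminant (modTwoForm U) (U + Uᵀ).det := by
  induction hn : Fintype.card ι using Nat.strong_induction_on generalizing ι with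
  | _ n ih =>
    rcases isEmpty_or_nonempty ι with _ | ⟨⟨i⟩⟩
    · exact .inl ⟨.inl det_isEmpty, isPolarizable_of_subsingleton _⟩
    have := isLocalRing_zmod_eight
    obtain ⟨j, hij⟩ := exists_isUnit_apply_of_isUnit_det hU i
    have hne : i ≠ j := by
      rintro rfl
      exact (by decide : ∀ a : ZMod 8, ¬ IsUnit (a + a)) _ hij
    let f : Fin 2 ↪ ι := ⟨![i, j], by
      intro a b hab
      fin_cases a <;> fin_cases b <;> simp_all⟩
    have hplane : IsUnit (U.submatrix f f + (U.submatrix f f)ᵀ).det := by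
      rw [det_add_transpose_fin_two hij]
      exact (by decide : ∀ a : ZMod 8, IsUnit (4 * a - 1)) _
    obtain ⟨S, hdet, hsplit⟩ := exists_orthogonal_split reduceModTwo U f hplane
    have hS : IsUnit (S + Sᵀ).det := isUnit_of_mul_isUnit_right (hdet ▸ hU)
    have hcard : Fintype.card ↥(Set.range f)ᶜ < n := by
      rw [← hn]
      exact Fintype.card_subtype_lt (x := i) (fun h => h ⟨0, rfl⟩)
    rw [hdet]
    exact ((ih _ hcard S hS rfl).modTwoForm_prod hij).of_equivalent hsplit

end ArfInvariant

section Reduction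

variable {R S M N ι : Type*} [CommRing R] [CommRing S] [AddCommGroup M] [Module R M]
  [AddCommGroup N] [Module S N] {φ : R →+* S}

theorem comap_sup_comap_eq_top {π : M →ₛₗ[φ] N} (hπ : Function.Surjective π)
    {X Y : Submodule S N} (hXY : X ⊔ Y = ⊤) : X.comap π ⊔ Y.comap π = ⊤ := by
  refine eq_top_iff.2 fun z _ => ?_
  obtain ⟨x, hx, y, hy, hxy⟩ := Submodule.mem_sup.1 (hXY ▸ Submodule.mem_top : π z ∈ X ⊔ Y)
  obtain ⟨u, rfl⟩ := hπ x
  refine Submodule.mem_sup.2 ⟨u, hx, z - u, ?_, add_sub_cancel u z⟩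
  rwa [Submodule.mem_comap, map_sub, ← hxy, add_sub_cancel_left]

/-- The coordinates of a vector in the basis `b`, with the ring homomorphism `φ` applied to each
of them. -/
def mapCoords (φ : R →+* S) (b : Basis ι R M) : M →ₛₗ[φ] ι → S where
  toFun x i := φ (b.repr x i)
  map_add' x y := funext fun i => by simp
  map_smul' c x := funext fun i => by simp

theorem mapCoords_surjective [Finite ι] (hφ : Function.Surjective φ) (b : Basis ι R M) :
    Function.Surjective (mapCoords φ b) := fun v => by
  obtain ⟨w, rfl⟩ := hφ.comp_left v
  exact ⟨b.equivFun.symm w, funext fun i => congrArg φ (congrFun (b.equivFun.apply_symm_apply w) i)⟩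

theorem toQuadraticForm'_mapCoords [Fintype ι] [DecidableEq ι] (φ : R →+* S)
    (b : Basis ι R M) (B : LinearMap.BilinForm R M) (x : M) :
    ((LinearMap.BilinForm.toMatrix b B).map φ).toQuadraticForm' (mapCoords φ b x) = φ (B x x) := by
  rw [toQuadraticForm'_apply, B.apply_eq_dotProduct_toMatrix_mulVec b, RingHom.map_dotProduct]
  exact congrArg (_ ⬝ᵥ ·) (funext fun i => (RingHom.map_mulVec φ _ _ i).symm)

theorem ker_mapCoords_intCast {M : Type*} [AddCommGroup M] [Finite ι] (b : Basis ι ℤ M)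
    (n : ℕ) :
    LinearMap.ker (mapCoords (Int.castRingHom (ZMod n)) b) = (n : ℤ) • ⊤ := by
  ext x
  rw [LinearMap.mem_ker, Submodule.mem_smul_pointwise_iff_exists]
  refine ⟨fun hx => ?_, ?_⟩
  · have hdvd (i : ι) : (n : ℤ) ∣ b.repr x i :=
      (ZMod.intCast_zmod_eq_zero_iff_dvd _ _).1 (congrFun hx i)
    choose c hc using hdvd
    refine ⟨b.equivFun.symm c, trivial, b.equivFun.injective (funext fun i => ?_)⟩
    rw [map_smul, b.equivFun.apply_symm_apply]
    exact (hc i).symm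
  · rintro ⟨y, -, rfl⟩
    rw [map_smulₛₗ, map_natCast, ZMod.natCast_self, zero_smul]

end Reduction

section IntegralForm

variable {ι M : Type*} [Fintype ι] [DecidableEq ι] [AddCommGroup M]

theorem isPolarizable_modTwoForm {U : Matrix ι ι (ZMod 8)}
    (hU : (U + Uᵀ).det = 1 ∨ (U + Uᵀ).det = -1) : IsPolarizable (modTwoForm U) := by
  have hunit : IsUnit (U + Uᵀ).det := by rcases hU with h | h <;> simp [h]
  refine (hasArfDiscriminant_modTwoForm U hunit).elim And.right fun h => ?_
  exact absurd h.1 (by rcases hU with h | h <;> rw [h] <;> decide)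

theorem exists_polarization_of_det_polar (Q : QuadraticForm ℤ M) (b : Basis ι ℤ M) {d : ℤ}
    (hd : (Matrix.of fun i j => polar Q (b i) (b j)).det = d)
    (hd8 : (d : ZMod 8) = 1 ∨ (d : ZMod 8) = -1) :
    ∃ X Y : Submodule ℤ M, X ⊔ Y = ⊤ ∧ X ⊓ Y = (2 : ℤ) • ⊤ ∧
      (∀ x ∈ X, 2 ∣ Q x) ∧ ∀ y ∈ Y, 2 ∣ Q y := by
  have := Module.Free.of_basis b
  obtain ⟨B, rfl⟩ := LinearMap.BilinMap.toQuadraticMap_surjective Q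
  let G := LinearMap.BilinForm.toMatrix b B
  let U := G.map (Int.castRingHom (ZMod 8))
  have hgram : Matrix.of (fun i j => polar B.toQuadraticMap (b i) (b j)) = G + Gᵀ := by
    ext i j
    simp [G, LinearMap.BilinMap.polar_toQuadraticMap]
  have hU : (U + Uᵀ).det = d := by
    rw [← hd, hgram, Int.cast_det]
    exact congrArg det (Matrix.ext fun i j => (Int.cast_add (G i j) (G j i)).symm)
  rw [← hU] at hd8
  let π := mapCoords (Int.castRingHom (ZMod 2)) b
  have hπ (x : M) : modTwoForm U (π x) = (B x x : ZMod 2) := by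
    have hmap : U.map reduceModTwo = G.map (Int.castRingHom (ZMod 2)) :=
      Matrix.ext fun i j => map_intCast reduceModTwo (G i j)
    rw [modTwoForm, hmap]
    exact toQuadraticForm'_mapCoords _ b B x
  obtain ⟨X, Y, hXY, hX, hY⟩ := isPolarizable_modTwoForm hd8
  refine ⟨X.comap π, Y.comap π, ?_, ?_, fun x hx => ?_, fun y hy => ?_⟩
  · exact comap_sup_comap_eq_top (mapCoords_surjective ZMod.intCast_surjective b) hXY.sup_eq_top
  · rw [← Submodule.comap_inf, hXY.inf_eq_bot, Submodule.comap_bot]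
    exact ker_mapCoords_intCast b 2
  · exact (ZMod.intCast_zmod_eq_zero_iff_dvd _ 2).1 ((hπ x).symm.trans (hX _ hx))
  · exact (ZMod.intCast_zmod_eq_zero_iff_dvd _ 2).1 ((hπ y).symm.trans (hY _ hy))

end IntegralForm

section EvenLattice

theorem inner_eq_of_inner_self_eq {E : Submodule ℤ V} {q : E → ℤ}
    (hq : ∀ x : E, ⟪(x : V), (x : V)⟫ = 2 * (q x : ℝ)) (x y : E) :
    ⟪(x : V), (y : V)⟫ = ((polar q x y : ℤ) : ℝ) := by
  have hxy := hq (x + y)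
  rw [Submodule.coe_add, real_inner_add_add_self, hq x, hq y] at hxy
  rw [polar]
  push_cast
  linarith

theorem exists_quadraticForm_of_isEvenLat {E : Submodule ℤ V} (hE : IsEvenLat E) :
    ∃ Q : QuadraticForm ℤ E, ∀ x : E, ⟪(x : V), (x : V)⟫ = 2 * (Q x : ℝ) := by
  choose q hq using fun x : E => hE.2 x x.2
  have hpolar := inner_eq_of_inner_self_eq hq
  refine ⟨.ofPolar q (fun a x => ?_) (fun x x' y => ?_) (fun a x y => ?_), hq⟩ <;>
    apply Int.cast_injective (α := ℝ)
  · have h := hq (a • x)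
    rw [Submodule.coe_smul_of_tower, ← Int.cast_smul_eq_zsmul ℝ, real_inner_smul_left,
      real_inner_smul_right, hq x] at h
    push_cast [smul_eq_mul]
    linarith
  · rw [Int.cast_add, ← hpolar, ← hpolar, ← hpolar, Submodule.coe_add, inner_add_left]
  · rw [smul_eq_mul, Int.cast_mul, ← hpolar, ← hpolar, Submodule.coe_smul_of_tower,
      ← Int.cast_smul_eq_zsmul ℝ, real_inner_smul_left]

theorem statement7_general {ι : Type*} [Fintype ι] [DecidableEq ι] {E : Submodule ℤ V}
    (hE : IsEvenLat E) (b : Basis ι ℤ E) {d : ℤ}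
    (hd : (Matrix.of fun i j => ⟪(b i : V), (b j : V)⟫).det = d)
    (hd8 : (d : ZMod 8) = 1 ∨ (d : ZMod 8) = -1) :
    ∃ X Y : Submodule ℤ V, X ≤ E ∧ Y ≤ E ∧ X ⊔ Y = E ∧ X ⊓ Y = (2 : ℤ) • E ∧
      (∀ x ∈ X, ∃ n : ℤ, ⟪x, x⟫ = 4 * (n : ℝ)) ∧
      (∀ y ∈ Y, ∃ n : ℤ, ⟪y, y⟫ = 4 * (n : ℝ)) := by
  obtain ⟨Q, hQ⟩ := exists_quadraticForm_of_isEvenLat hE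
  have hgram : (Matrix.of fun i j => polar Q (b i) (b j)).det = d := by
    apply Int.cast_injective (α := ℝ)
    rw [← hd, Int.cast_det]
    exact congrArg det (Matrix.ext fun i j => (inner_eq_of_inner_self_eq hQ (b i) (b j)).symm)
  have hnorm {x : E} (hx : 2 ∣ Q x) : ∃ n : ℤ, ⟪(x : V), (x : V)⟫ = 4 * (n : ℝ) := by
    obtain ⟨n, hn⟩ := hx
    exact ⟨n, by rw [hQ, hn]; push_cast; ring⟩
  obtain ⟨X, Y, hsup, hinf, hX, hY⟩ := exists_polarization_of_det_polar Q b hgram hd8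
  refine ⟨X.map E.subtype, Y.map E.subtype, E.map_subtype_le X, E.map_subtype_le Y, ?_, ?_, ?_, ?_⟩
  · rw [← Submodule.map_sup, hsup, Submodule.map_subtype_top]
  · rw [← Submodule.map_inf _ E.injective_subtype, hinf, Submodule.map_pointwise_smul,
      Submodule.map_subtype_top]
  · rintro _ ⟨x, hx, rfl⟩
    exact hnorm (hX x hx)
  · rintro _ ⟨y, hy, rfl⟩
    exact hnorm (hY y hy)

end EvenLattice

/-- an `E8`-lattice has an even polarization: sublattices `X, Y` with
`X + Y = E`, `X ∩ Y = 2E` and all norms of elements of `X` and of `Y` in `4ℤ`. -/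
theorem statement7 [FiniteDimensional ℝ V] (hdim : finrank ℝ V = 8)
    (E : Submodule ℤ V) (hE : IsLat E) (hEeven : IsEvenLat E) (hEuni : IsUnimodularLat E) :
    ∃ X Y : Submodule ℤ V, X ≤ E ∧ Y ≤ E ∧ X ⊔ Y = E ∧ X ⊓ Y = (2 : ℤ) • E ∧
      (∀ x ∈ X, ∃ n : ℤ, ⟪x, x⟫ = 4 * (n : ℝ)) ∧
      (∀ y ∈ Y, ∃ n : ℤ, ⟪y, y⟫ = 4 * (n : ℝ)) := by
  obtain ⟨_, b, hb⟩ := hEuni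
  exact statement7_general hEeven b (hb.trans Int.cast_one.symm) (.inl Int.cast_one)
end
end
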